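/- Let 0 ≤ c ≤ 1 and r ≥ 0. The canonical state with a left-handed spherical steering ellipsoid of radius r centred at (0,0,c), namely ρ̃((0,0,c),(r,r,−r)), is positive semidefinite if and only if r ≤ 1 − c. (This is the physical–unphysical boundary for spherical ellipsoids: a left-handed sphere inside the Bloch sphere is always physical.) -/

import Mathlib

open Matrix Kronecker Polynomial
open scoped ComplexOrder

noncomputable section

/-- The Pauli matrices: `pauli 0 = I₂`, `pauli 1 = σ₁`, `pauli 2 = σ₂`, `pauli 3 = σ₃`. -/
def pauli : Fin 4 → Matrix (Fin 2) (Fin 2) ℂ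
  | 0 => !![1, 0; 0, 1]
  | 1 => !![0, 1; 1, 0]
  | 2 => !![0, -Complex.I; Complex.I, 0]
  | 3 => !![1, 0; 0, -1]

/-- Euclidean norm of a vector in ℝ³. -/
def norm3 (v : Fin 3 → ℝ) : ℝ := Real.sqrt (∑ i, v i ^ 2)

/-- The canonical axis-aligned two-qubit operator with steering-ellipsoid centre `c`
and signed semiaxes `t`:
`ρ̃(c,t) = (1/4)(I₄ + Σᵢ cᵢ (σᵢ⊗σ₀) + Σᵢ tᵢ (σᵢ⊗σᵢ))`. -/
def rhoTilde (c t : Fin 3 → ℝ) : Matrix (Fin 2 × Fin 2) (Fin 2 × Fin 2) ℂ :=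
  (1 / 4 : ℂ) • ((1 : Matrix (Fin 2 × Fin 2) (Fin 2 × Fin 2) ℂ)
    + ∑ i : Fin 3, (c i : ℂ) • (pauli i.succ ⊗ₖ pauli 0)
    + ∑ i : Fin 3, (t i : ℂ) • (pauli i.succ ⊗ₖ pauli i.succ))

/-
Write `v = |01⟩ + |10⟩`. Since `σ₁⊗σ₁ + σ₂⊗σ₂ - σ₃⊗σ₃ = 2 v v* - 1`, the state with a left-handed
sphere of radius `r` centred at `c` satisfies `4 ρ̃ = ((1 - r) + c · σ) ⊗ 1 + 2 r v v*`.
For each qubit vector `u` there is a nonzero `w` with `u ⊗ w` orthogonal to `v`, so testing on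
product vectors shows that the positive rank-one term never helps: `ρ̃ ≥ 0` if and only if the
`2 × 2` matrix `(1 - r) + c · σ`, whose eigenvalues are `1 - r ± ‖c‖`, is positive semidefinite.
-/

theorem posSemidef_smul_iff_of_pos {𝕜 n : Type*} [RCLike 𝕜] {A : Matrix n n 𝕜} {a : 𝕜}
    (ha : 0 < a) : (a • A).PosSemidef ↔ A.PosSemidef := by
  refine ⟨fun h => ?_, fun h => h.smul ha.le⟩
  simpa only [inv_smul_smul₀ ha.ne'] using h.smul (RCLike.inv_pos_of_pos ha).le

-- `vec` stacks columns, so the product vector `u ⊗ w` is `vec (vecMulVec w u)`.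
theorem exists_ne_zero_mulVec_vec_vecMulVec_eq_zero {K l m n : Type*} [Field K]
    [Fintype m] [Fintype n] {B : Matrix l (n × m) K} (hB : B.rank < Fintype.card m) (u : n → K) :
    ∃ w : m → K, w ≠ 0 ∧ B *ᵥ vec (vecMulVec w u) = 0 := by
  let tensorRight : (m → K) →ₗ[K] (n × m → K) :=
    { toFun := fun w => vec (vecMulVec w u)
      map_add' := fun w w' => by rw [add_vecMulVec, vec_add]
      map_smul' := fun a w => by rw [smul_vecMulVec, vec_smul, RingHom.id_apply] }
  let f := B.mulVecLin ∘ₗ tensorRight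
  have hf : LinearMap.ker f ≠ ⊥ := fun hker => hB.not_ge <|
    calc Fintype.card m = Module.finrank K (LinearMap.range f) := by
          rw [LinearMap.finrank_range_of_inj (LinearMap.ker_eq_bot.mp hker),
            Module.finrank_fintype_fun_eq_card]
      _ ≤ B.rank := Submodule.finrank_mono (LinearMap.range_comp_le_range _ _)
  obtain ⟨w, hw, hw0⟩ := Submodule.exists_mem_ne_zero_of_ne_bot hf
  exact ⟨w, hw0, hw⟩

theorem star_vec_vecMulVec_dotProduct_kronecker_one_mulVec {R m n : Type*}
    [CommSemiring R] [StarRing R] [Fintype m] [DecidableEq m] [Fintype n] (A : Matrix n n R)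
    (u : n → R) (w : m → R) :
    star (vec (vecMulVec w u)) ⬝ᵥ (A ⊗ₖ (1 : Matrix m m R)) *ᵥ vec (vecMulVec w u) =
      (star w ⬝ᵥ w) * (star u ⬝ᵥ A *ᵥ u) := by
  rw [kronecker_mulVec_vec, Matrix.one_mul, vecMulVec_mul, vecMul_transpose,
    star_vec_dotProduct_vec, conjTranspose_vecMulVec, vecMulVec_mul_vecMulVec, trace_vecMulVec,
    dotProduct_smul, smul_eq_mul]

theorem posSemidef_kronecker_one_add_iff {𝕜 m n : Type*} [RCLike 𝕜] [Fintype m]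
    [DecidableEq m] [Fintype n] {A : Matrix n n 𝕜} {B : Matrix (n × m) (n × m) 𝕜}
    (hA : A.IsHermitian) (hB : B.PosSemidef) (hrank : B.rank < Fintype.card m) :
    (A ⊗ₖ (1 : Matrix m m 𝕜) + B).PosSemidef ↔ A.PosSemidef := by
  refine ⟨fun h => .of_dotProduct_mulVec_nonneg hA fun u => ?_,
    fun h => (h.kronecker .one).add hB⟩
  obtain ⟨w, hw0, hBw⟩ := exists_ne_zero_mulVec_vec_vecMulVec_eq_zero hrank u
  have hnonneg : 0 ≤ (star w ⬝ᵥ w) * (star u ⬝ᵥ A *ᵥ u) := by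
    simpa only [add_mulVec, hBw, add_zero,
      star_vec_vecMulVec_dotProduct_kronecker_one_mulVec] using
      h.dotProduct_mulVec_nonneg (vec (vecMulVec w u))
  have hw : 0 < star w ⬝ᵥ w := dotProduct_star_self_pos_iff.mpr hw0
  simpa only [inv_mul_cancel_left₀ hw.ne'] using
    mul_nonneg (RCLike.inv_pos_of_pos hw).le hnonneg

theorem posSemidef_kronecker_one_add_smul_vecMulVec_iff {𝕜 m n : Type*} [RCLike 𝕜] [Finite m]
    [DecidableEq m] [Nontrivial m] [Finite n] {A : Matrix n n 𝕜} (hA : A.IsHermitian) {s : 𝕜}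
    (hs : 0 ≤ s) (v : n × m → 𝕜) :
    (A ⊗ₖ (1 : Matrix m m 𝕜) + s • vecMulVec v (star v)).PosSemidef ↔ A.PosSemidef := by
  have := Fintype.ofFinite m
  have := Fintype.ofFinite n
  refine posSemidef_kronecker_one_add_iff hA ((posSemidef_vecMulVec_self_star v).smul hs) ?_
  rw [← smul_vecMulVec]
  exact (rank_vecMulVec_le _ _).trans_lt Fintype.one_lt_card

theorem posSemidef_fin_two_iff {𝕜 : Type*} [RCLike 𝕜] {A : Matrix (Fin 2) (Fin 2) 𝕜}
    (hA : A.IsHermitian) : A.PosSemidef ↔ 0 ≤ A.trace ∧ 0 ≤ A.det := by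
  refine ⟨fun h => ⟨h.trace_nonneg, h.det_nonneg⟩, fun ⟨htrace, hdet⟩ => ?_⟩
  rw [hA.trace_eq_sum_eigenvalues, Fin.sum_univ_two] at htrace
  rw [hA.det_eq_prod_eigenvalues, Fin.prod_univ_two] at hdet
  norm_cast at htrace hdet
  rw [hA.posSemidef_iff_eigenvalues_nonneg, Pi.le_def, Fin.forall_fin_two]
  constructor <;> simp only [Pi.zero_apply] <;> nlinarith

theorem norm3_axis (z : ℝ) : norm3 ![0, 0, z] = |z| := by
  simp [norm3, Fin.sum_univ_three, Real.sqrt_sq_eq_abs]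

/-- The operator `c · σ = ∑ᵢ cᵢ σᵢ` on a single qubit. -/
def pauliDot (c : Fin 3 → ℝ) : Matrix (Fin 2) (Fin 2) ℂ :=
  ∑ i : Fin 3, (c i : ℂ) • pauli i.succ

theorem isHermitian_pauli (k : Fin 4) : (pauli k).IsHermitian := by
  ext i j
  fin_cases k <;> fin_cases i <;> fin_cases j <;> simp [pauli]

theorem isHermitian_smul_one_add_pauliDot (a : ℝ) (c : Fin 3 → ℝ) :
    ((a : ℂ) • (1 : Matrix (Fin 2) (Fin 2) ℂ) + pauliDot c).IsHermitian :=
  (isHermitian_one.smul (Complex.conj_ofReal a)).add <|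
    isSelfAdjoint_sum _ fun i _ => (isHermitian_pauli i.succ).smul (Complex.conj_ofReal (c i))

theorem smul_one_add_pauliDot_eq (a : ℝ) (c : Fin 3 → ℝ) :
    (a : ℂ) • (1 : Matrix (Fin 2) (Fin 2) ℂ) + pauliDot c =
      !![(a : ℂ) + c 2, c 0 - c 1 * Complex.I; c 0 + c 1 * Complex.I, a - c 2] := by
  ext i j
  fin_cases i <;> fin_cases j <;> simp [pauliDot, pauli, Fin.sum_univ_three, sub_eq_add_neg]

theorem trace_smul_one_add_pauliDot (a : ℝ) (c : Fin 3 → ℝ) :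
    ((a : ℂ) • (1 : Matrix (Fin 2) (Fin 2) ℂ) + pauliDot c).trace = (2 * a : ℝ) := by
  rw [smul_one_add_pauliDot_eq, trace_fin_two_of]
  push_cast
  ring

theorem det_smul_one_add_pauliDot (a : ℝ) (c : Fin 3 → ℝ) :
    ((a : ℂ) • (1 : Matrix (Fin 2) (Fin 2) ℂ) + pauliDot c).det =
      (a ^ 2 - ∑ i, c i ^ 2 : ℝ) := by
  rw [smul_one_add_pauliDot_eq, det_fin_two_of, Fin.sum_univ_three]
  push_cast
  linear_combination (c 1 : ℂ) ^ 2 * Complex.I_sq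

theorem posSemidef_smul_one_add_pauliDot_iff (a : ℝ) (c : Fin 3 → ℝ) :
    ((a : ℂ) • (1 : Matrix (Fin 2) (Fin 2) ℂ) + pauliDot c).PosSemidef ↔ norm3 c ≤ a := by
  rw [posSemidef_fin_two_iff (isHermitian_smul_one_add_pauliDot a c),
    trace_smul_one_add_pauliDot, det_smul_one_add_pauliDot, Complex.zero_le_real,
    Complex.zero_le_real, sub_nonneg, mul_nonneg_iff_of_pos_left two_pos, norm3,
    Real.sqrt_le_iff]

/-- The unnormalised Bell vector `√2 |ψ⁺⟩ = |01⟩ + |10⟩`. -/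
def bellPsiPlus : Fin 2 × Fin 2 → ℂ :=
  Pi.single (0, 1) 1 + Pi.single (1, 0) 1

theorem pauli_zero : pauli 0 = 1 := one_fin_two.symm

theorem pauli_leftHanded_correlation_eq :
    pauli 1 ⊗ₖ pauli 1 + pauli 2 ⊗ₖ pauli 2 - pauli 3 ⊗ₖ pauli 3 =
      (2 : ℂ) • vecMulVec bellPsiPlus (star bellPsiPlus) - 1 := by
  ext ⟨i₁, i₂⟩ ⟨j₁, j₂⟩
  fin_cases i₁ <;> fin_cases i₂ <;> fin_cases j₁ <;> fin_cases j₂ <;>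
    norm_num [pauli, bellPsiPlus, vecMulVec_apply, Pi.single_apply, Matrix.one_apply]

theorem rhoTilde_leftHandedSphere_eq (c : Fin 3 → ℝ) (r : ℝ) :
    rhoTilde c ![r, r, -r] = (1 / 4 : ℂ) •
      ((((1 - r : ℝ) : ℂ) • (1 : Matrix (Fin 2) (Fin 2) ℂ) + pauliDot c) ⊗ₖ
          (1 : Matrix (Fin 2) (Fin 2) ℂ) +
        ((2 * r : ℝ) : ℂ) • vecMulVec bellPsiPlus (star bellPsiPlus)) := by
  have hcentre : ∑ i : Fin 3, (c i : ℂ) • (pauli i.succ ⊗ₖ pauli 0) = pauliDot c ⊗ₖ 1 := by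
    simp only [pauliDot, pauli_zero, Fin.sum_univ_three, add_kronecker, smul_kronecker]
  have haxes : ∑ i : Fin 3, ((![r, r, -r] i : ℝ) : ℂ) • (pauli i.succ ⊗ₖ pauli i.succ) =
      (r : ℂ) • ((2 : ℂ) • vecMulVec bellPsiPlus (star bellPsiPlus) - 1) := by
    rw [← pauli_leftHanded_correlation_eq]
    simp [Fin.sum_univ_three, smul_add, sub_eq_add_neg]
  rw [rhoTilde, hcentre, haxes, add_kronecker, smul_kronecker, one_kronecker_one]
  push_cast
  module

theorem stmt5_general (c : Fin 3 → ℝ) (r : ℝ) (hr : 0 ≤ r) :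
    (rhoTilde c ![r, r, -r]).PosSemidef ↔ r ≤ 1 - norm3 c := by
  rw [rhoTilde_leftHandedSphere_eq, posSemidef_smul_iff_of_pos (by norm_num),
    posSemidef_kronecker_one_add_smul_vecMulVec_iff (isHermitian_smul_one_add_pauliDot _ _)
      (Complex.zero_le_real.mpr (by positivity)),
    posSemidef_smul_one_add_pauliDot_iff, le_sub_comm]

/-- Physical–unphysical boundary for left-handed spherical steering ellipsoids of
radius `r` centred at `(0,0,c)`: physical iff `r ≤ 1 − c`. -/
theorem stmt5 (c r : ℝ) (hc0 : 0 ≤ c) (hc1 : c ≤ 1) (hr : 0 ≤ r) :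
    (rhoTilde ![0, 0, c] ![r, r, -r]).PosSemidef ↔ r ≤ 1 - c := by
  rw [stmt5_general _ r hr, norm3_axis, abs_of_nonneg hc0]
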